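/- Let 𝒲, 𝒰, 𝒳 be measurable spaces, κ a Markov kernel from 𝒰 to 𝒲 (the domain-invariant conditional law of W given U), k a positive integer, and for each r ∈ {1, …, k} let ν_r be a Markov kernel from 𝒳 to 𝒰 (the law P(U | x, z_r) in source domain r); let μ be a σ-finite measure on 𝒰 (the source marginal P(U)). Let m₀ : 𝒲 × 𝒳 → ℝ and g : 𝒳 × 𝒰 → ℝ be bounded measurable (g is the domain-invariant conditional mean E[Y | x, u]). Assume: (i) for every r and every x: ∫_𝒰 g(x,u) dν_r(x)(u) = ∫_𝒰 (∫_𝒲 m₀(w,x) dκ(u)(w)) dν_r(x)(u); (ii) completeness: for every x and every bounded measurable ℓ : 𝒰 → ℝ, if ∫_𝒰 ℓ dν_r(x) = 0 for all r ∈ {1, …, k}, then ℓ = 0 μ-a.e.; (iii) ν_q is a Markov kernel from 𝒳 to 𝒰 (the target law Q(U | x)) with ν_q(x) absolutely continuous with respect to μ for every x. Then for every x ∈ 𝒳: ∫_𝒰 g(x,u) dν_q(x)(u) = ∫_𝒰 (∫_𝒲 m₀(w,x) dκ(u)(w)) dν_q(x)(u); that is, E_q[Y | x] = E_q[m₀(W,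 x) | x]. -/

import Mathlib

open MeasureTheory ProbabilityTheory

/-!
For fixed `x`, the residual `u ↦ g (x, u) - ∫ m₀ (w, x) dκ(u)(w)` is a bounded function of
the latent variable alone, and the bridge equations say that its mean vanishes in every source
domain. Completeness upgrades this to vanishing `μ`-almost everywhere, a statement that no
longer mentions the source domains and so passes to every latent law `Q ≪ μ`.
-/

/-- Bounded completeness of the family of laws `P` relative to `μ`: a bounded measurable function
with mean zero under every `P i` vanishes `μ`-almost everywhere. The null sets are those of a
separate measure `μ`, since the latent marginal is not a member of the family of conditional laws
`P(U | x, z_r)`. -/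
def IsBoundedlyComplete {U ι : Type*} [MeasurableSpace U] (P : ι → Measure U) (μ : Measure U) :
    Prop :=
  ∀ ℓ : U → ℝ, Measurable ℓ → (∃ M, ∀ u, |ℓ u| ≤ M) → (∀ i, ∫ u, ℓ u ∂P i = 0) → ℓ =ᵐ[μ] 0

section

variable {W U ι : Type*} [MeasurableSpace W] [MeasurableSpace U]

theorem exists_abs_integral_kernel_le (κ : Kernel U W) [IsFiniteKernel κ] {f : W → ℝ}
    (hfb : ∃ M, ∀ w, |f w| ≤ M) : ∃ M, ∀ u, |∫ w, f w ∂κ u| ≤ M := by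
  obtain ⟨M, hM⟩ := hfb
  refine ⟨|M| * κ.bound.toReal, fun u => ?_⟩
  have mass_le : (κ u).real Set.univ ≤ κ.bound.toReal :=
    ENNReal.toReal_mono κ.bound_ne_top (κ.measure_le_bound u Set.univ)
  calc ‖∫ w, f w ∂κ u‖
      ≤ |M| * (κ u).real Set.univ :=
        norm_integral_le_of_norm_le_const (.of_forall fun w => (hM w).trans (le_abs_self M))
    _ ≤ |M| * κ.bound.toReal := by gcongr

theorem IsBoundedlyComplete.ae_eq {P : ι → Measure U} [∀ i, IsFiniteMeasure (P i)]
    {μ : Measure U} (hP : IsBoundedlyComplete P μ) {f g : U → ℝ}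
    (hf : Measurable f) (hfb : ∃ M, ∀ u, |f u| ≤ M)
    (hg : Measurable g) (hgb : ∃ M, ∀ u, |g u| ≤ M)
    (hfg : ∀ i, ∫ u, f u ∂P i = ∫ u, g u ∂P i) : f =ᵐ[μ] g := by
  obtain ⟨F, hF⟩ := hfb
  obtain ⟨G, hG⟩ := hgb
  have sub_bounded (u : U) : |f u - g u| ≤ F + G :=
    (abs_sub _ _).trans (add_le_add (hF u) (hG u))
  have integral_sub_eq_zero (i : ι) : ∫ u, f u - g u ∂P i = 0 := by
    have f_integrable : Integrable f (P i) := .of_bound hf.aestronglyMeasurable F (.of_forall hF)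
    have g_integrable : Integrable g (P i) := .of_bound hg.aestronglyMeasurable G (.of_forall hG)
    rw [integral_sub f_integrable g_integrable, hfg i, sub_self]
  have sub_ae_eq_zero : f - g =ᵐ[μ] 0 :=
    hP _ (hf.sub hg) ⟨F + G, sub_bounded⟩ integral_sub_eq_zero
  exact sub_ae_eq_zero.mono fun _ hu => sub_eq_zero.mp hu

theorem multidomain_transfer_general (κ : Kernel U W) [IsFiniteKernel κ]
    {P : ι → Measure U} [∀ i, IsFiniteMeasure (P i)] {μ Q : Measure U}
    {m : W → ℝ} (hm : Measurable m) (hmb : ∃ M, ∀ w, |m w| ≤ M)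
    {g : U → ℝ} (hg : Measurable g) (hgb : ∃ M, ∀ u, |g u| ≤ M)
    (hbridge : ∀ i, ∫ u, g u ∂P i = ∫ u, (∫ w, m w ∂κ u) ∂P i)
    (hP : IsBoundedlyComplete P μ) (hQ : Q ≪ μ) :
    ∫ u, g u ∂Q = ∫ u, (∫ w, m w ∂κ u) ∂Q := by
  have kernel_mean_measurable : Measurable fun u => ∫ w, m w ∂κ u :=
    hm.stronglyMeasurable.integral_kernel.measurable
  have g_ae_eq_kernel_mean : g =ᵐ[μ] fun u => ∫ w, m w ∂κ u :=
    hP.ae_eq hg hgb kernel_mean_measurable (exists_abs_integral_kernel_le κ hmb) hbridge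
  exact integral_congr_ae (hQ.ae_le g_ae_eq_kernel_mean)

end

/-- Multi-domain transfer with continuous variables: a bridge function `m₀`
satisfying the bridge equation in each of the `k` source domains transfers
to any target domain whose latent law is supported on the source marginal,
so that `E_q[Y | x] = E_q[m₀(W, x) | x]`. -/
theorem multidomain_transfer
    {W U X : Type*} [MeasurableSpace W] [MeasurableSpace U] [MeasurableSpace X]
    (κ : Kernel U W) [IsMarkovKernel κ]
    (k : ℕ) (hk : 0 < k)
    (ν : Fin k → Kernel X U) (hν : ∀ r, IsMarkovKernel (ν r))
    (μ : Measure U) [SigmaFinite μ]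
    (m₀ : W × X → ℝ) (g : X × U → ℝ)
    (hm₀m : Measurable m₀) (hm₀b : ∃ M, ∀ z, |m₀ z| ≤ M)
    (hgm : Measurable g) (hgb : ∃ M, ∀ z, |g z| ≤ M)
    (hbridge : ∀ (r : Fin k) (x : X), ∫ u, g (x, u) ∂(ν r x) =
      ∫ u, (∫ w, m₀ (w, x) ∂(κ u)) ∂(ν r x))
    (hcomplete : ∀ (x : X) (ℓ : U → ℝ), Measurable ℓ →
      (∃ M, ∀ u, |ℓ u| ≤ M) →
      (∀ r : Fin k, ∫ u, ℓ u ∂(ν r x) = 0) → ℓ =ᵐ[μ] 0)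
    (νq : Kernel X U) [IsMarkovKernel νq]
    (hsupp : ∀ x, νq x ≪ μ) :
    ∀ x : X, ∫ u, g (x, u) ∂(νq x) =
      ∫ u, (∫ w, m₀ (w, x) ∂(κ u)) ∂(νq x) :=
  fun x => multidomain_transfer_general κ
    (hm₀m.comp measurable_prodMk_right) (hm₀b.imp fun _ hM w => hM (w, x))
    (hgm.comp measurable_prodMk_left) (hgb.imp fun _ hG u => hG (x, u))
    (hbridge · x) (hcomplete x) (hsupp x)
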